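/- Let α, β > -1, s ∈ ℕ, θ ∈ [-1,1], 1 ≤ p ≤ ∞, and let f ∈ W_p^s(w_{α,β}) (f ∈ C^s[-1,1] when p = ∞). Then for every n ≥ 0, 𝒮_{n,θ}^{α-s,β-s} f(x) = ∑_{k=0}^{min(n,s-1)} f^{(k)}(θ) (x-θ)^k/k! + ∫_θ^x ((x-t)^{s-1}/(s-1)!) S_{n-s}^{α,β} f^{(s)}(t) dt (where S_m^{α,β} = 0 for m < 0); in particular, for n ≥ s, the s-th derivative satisfies (𝒮_{n,θ}^{α-s,β-s} f)^{(s)} = S_{n-s}^{α,β}(f^{(s)}). -/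

import Mathlib

open MeasureTheory Set ENNReal NNReal

noncomputable section

namespace JacobiApprox

/-- The Jacobi weight `w_{α,β}(x) = (1-x)^α (1+x)^β` on `(-1,1)`. -/
def w (α β x : ℝ) : ℝ := (1 - x) ^ α * (1 + x) ^ β

/-- The weighted `L^p` norm `‖f‖_{L^p(w_{α,β})}`; for `p = ∞` it is the uniform
norm on `[-1,1]`. -/
def LpW (α β : ℝ) (p : ℝ≥0∞) (f : ℝ → ℝ) : ℝ :=
  if p = ⊤ then sSup ((fun x => |f x|) '' Icc (-1 : ℝ) 1)
  else (∫ x in Ioo (-1 : ℝ) 1, |f x| ^ p.toReal * w α β x) ^ (1 / p.toReal)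

/-- Membership in `L^p(w_{α,β})` (`f ∈ C[-1,1]` when `p = ∞`). -/
def MemLpW (α β : ℝ) (p : ℝ≥0∞) (f : ℝ → ℝ) : Prop :=
  Measurable f ∧
    (p ≠ ⊤ → IntegrableOn (fun x => |f x| ^ p.toReal * w α β x) (Ioo (-1 : ℝ) 1)) ∧
    (p = ⊤ → ContinuousOn f (Icc (-1 : ℝ) 1))

/-- `E_n(f)_{L^p(w_{α,β})}`: the error of best approximation of `f` by polynomials
of degree at most `n` in `L^p(w_{α,β})`. -/
def E (α β : ℝ) (p : ℝ≥0∞) (n : ℕ) (f : ℝ → ℝ) : ℝ :=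
  sInf {r : ℝ | ∃ q : Polynomial ℝ, q.natDegree ≤ n ∧
    r = LpW α β p (fun x => f x - q.eval x)}

/-- Membership in the Sobolev space `W_p^s(w_{α,β})`: `f` has `s` continuous
derivatives and `f^{(s)} ∈ L^p(w_{α,β})` (for `p = ∞` this is `f ∈ C^s[-1,1]`). -/
def MemW (α β : ℝ) (p : ℝ≥0∞) (s : ℕ) (f : ℝ → ℝ) : Prop :=
  ContDiff ℝ (s : ℕ∞) f ∧
    (p ≠ ⊤ → IntegrableOn (fun x => |iteratedDeriv s f x| ^ p.toReal * w α β x)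
      (Ioo (-1 : ℝ) 1))

/-- The Sobolev norm `‖f‖_{W_p^s(w_{α,β})}` (max over derivatives when `p = ∞`). -/
def WNorm (α β : ℝ) (p : ℝ≥0∞) (s : ℕ) (f : ℝ → ℝ) : ℝ :=
  if p = ⊤ then
    (Finset.range (s + 1)).sup' (Finset.nonempty_range_iff.mpr (Nat.succ_ne_zero s))
      (fun k => LpW α β ⊤ (iteratedDeriv k f))
  else (∑ k ∈ Finset.range (s + 1), (LpW α β p (iteratedDeriv k f)) ^ p.toReal) ^
    (1 / p.toReal)

/-- Pochhammer symbol (rising factorial) `(a)_k`. -/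
def poch (a : ℝ) (k : ℕ) : ℝ := ∏ i ∈ Finset.range k, (a + i)

/-- The Jacobi polynomial `P_n^{(α,β)}`. -/
def JP (α β : ℝ) (n : ℕ) (t : ℝ) : ℝ :=
  (poch (α + 1) n / n.factorial) *
    ∑ k ∈ Finset.range (n + 1),
      poch (-(n : ℝ)) k * poch ((n : ℝ) + α + β + 1) k /
        (poch (α + 1) k * k.factorial) * ((1 - t) / 2) ^ k

/-- The renormalized Jacobi polynomial `J_n^{α,β} = 2^n/(n+α+β+1)_n · P_n^{(α,β)}`. -/
def J (α β : ℝ) (n : ℕ) (t : ℝ) : ℝ :=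
  2 ^ n / poch ((n : ℝ) + α + β + 1) n * JP α β n t

/-- The inner product `⟨f,g⟩_{α,β} = ∫_{-1}^1 f g w_{α,β}`. -/
def ip (α β : ℝ) (f g : ℝ → ℝ) : ℝ := ∫ x in Ioo (-1 : ℝ) 1, f x * g x * w α β x

/-- `h_n^{α,β} = ⟨J_n^{α,β}, J_n^{α,β}⟩_{α,β}`. -/
def hJ (α β : ℝ) (n : ℕ) : ℝ := ip α β (J α β n) (J α β n)

/-- The Fourier–Jacobi coefficient `\hat f_n^{α,β}`. -/
def coeff (α β : ℝ) (n : ℕ) (f : ℝ → ℝ) : ℝ := ip α β f (J α β n) / hJ α β n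

/-- The `n`-th partial sum `S_n^{α,β} f` of the Fourier–Jacobi series. -/
def S (α β : ℝ) (n : ℕ) (f : ℝ → ℝ) (x : ℝ) : ℝ :=
  ∑ k ∈ Finset.range (n + 1), coeff α β k f * J α β k x

/-- An admissible cut-off function: `C^∞`, `η ≡ 1` on `[0,1]`, `η ≡ 0` on `[2,∞)`. -/
def Admissible (η : ℝ → ℝ) : Prop :=
  ContDiff ℝ (⊤ : ℕ∞) η ∧ (∀ t : ℝ, 0 ≤ t → t ≤ 1 → η t = 1) ∧ ∀ t : ℝ, 2 ≤ t → η t = 0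

/-- The de la Vallée Poussin type operator `V_n^{α,β} f`. -/
def V (η : ℝ → ℝ) (α β : ℝ) (n : ℕ) (f : ℝ → ℝ) (x : ℝ) : ℝ :=
  ∑ k ∈ Finset.range (2 * n + 1), η ((k : ℝ) / (n : ℝ)) * coeff α β k f * J α β k x

/-- The Sobolev orthogonal polynomial `𝒥_{n,θ}^{α-s,β-s}`. -/
def SJ (α β : ℝ) (s : ℕ) (θ : ℝ) (n : ℕ) (x : ℝ) : ℝ :=
  if n < s then (x - θ) ^ n / n.factorial
  else ∫ t in θ..x, (x - t) ^ (s - 1) / (s - 1).factorial * J α β (n - s) t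

/-- The Sobolev inner product `⟨f,g⟩_{α,β}^{-s}`. -/
def ipS (α β : ℝ) (s : ℕ) (θ : ℝ) (lam : ℕ → ℝ) (f g : ℝ → ℝ) : ℝ :=
  ip α β (iteratedDeriv s f) (iteratedDeriv s g) +
    ∑ k ∈ Finset.range s, lam k * iteratedDeriv k f θ * iteratedDeriv k g θ

/-- The Fourier coefficient `\hat{𝔣}_n^{α-s,β-s}` in the Sobolev orthogonal system. -/
def coeffS (α β : ℝ) (s : ℕ) (θ : ℝ) (lam : ℕ → ℝ) (n : ℕ) (f : ℝ → ℝ) : ℝ :=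
  ipS α β s θ lam f (SJ α β s θ n) / ipS α β s θ lam (SJ α β s θ n) (SJ α β s θ n)

/-- The `n`-th partial sum `𝒮_{n,θ}^{α-s,β-s} f` of the Sobolev orthogonal expansion. -/
def SS (α β : ℝ) (s : ℕ) (θ : ℝ) (lam : ℕ → ℝ) (n : ℕ) (f : ℝ → ℝ) (x : ℝ) : ℝ :=
  ∑ k ∈ Finset.range (n + 1), coeffS α β s θ lam k f * SJ α β s θ k x

/-- The operator `𝒱_{n,θ}^{α-s,β-s} f`. -/
def VS (η : ℝ → ℝ) (α β : ℝ) (s : ℕ) (θ : ℝ) (n : ℕ) (f : ℝ → ℝ) (x : ℝ) : ℝ :=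
  (∑ k ∈ Finset.range s, iteratedDeriv k f θ * (x - θ) ^ k / k.factorial) +
    ∫ t in θ..x, (x - t) ^ (s - 1) / (s - 1).factorial *
      V η α β n (iteratedDeriv s f) t

/-- `A_j^{α,β} = (α+β+2)_{2j}/(α+1)_j`. -/
def Acoef (α β : ℝ) (j : ℕ) : ℝ := poch (α + β + 2) (2 * j) / poch (α + 1) j

/-- `B_n^{α,β} = (α+1)_{n+1}/(α+β+2)_{2n+1}`. -/
def Bcoef (α β : ℝ) (n : ℕ) : ℝ := poch (α + 1) (n + 1) / poch (α + β + 2) (2 * n + 1)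

/-- `D_j^{α,β} = (j+β+1)/((2j+α+β+2)(2j+α+β+3))`. -/
def Dcoef (α β : ℝ) (j : ℕ) : ℝ :=
  ((j : ℝ) + β + 1) / ((2 * (j : ℝ) + α + β + 2) * (2 * (j : ℝ) + α + β + 3))

/-- The function `u_{g,k}` of the Aubin–Nitsche duality argument. -/
def u (α β : ℝ) (s k : ℕ) (g : ℝ → ℝ) (x : ℝ) : ℝ :=
  ∫ t in (-1 : ℝ)..x, (x - t) ^ (s - 1) / (s - 1).factorial * (1 / w α β t) *
    ∫ y in t..(1 : ℝ), (y - t) ^ (s - k - 1) / (s - k - 1).factorial * g y * w α β y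

/-- The `s`-th derivative of `u_{g,k}`, given by its explicit formula. -/
def uDs (α β : ℝ) (s k : ℕ) (g : ℝ → ℝ) (x : ℝ) : ℝ :=
  (1 / w α β x) *
    ∫ y in x..(1 : ℝ), (y - x) ^ (s - k - 1) / (s - k - 1).factorial * g y * w α β y


/-- iterated antiderivative from `θ` -/
def TT (θ : ℝ) (g : ℝ → ℝ) (x : ℝ) : ℝ := ∫ t in θ..x, g t

lemma TT_hasDeriv (θ : ℝ) {g : ℝ → ℝ} (hg : Continuous g) (x : ℝ) :
    HasDerivAt (TT θ g) (g x) x :=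
  intervalIntegral.integral_hasDerivAt_right (hg.intervalIntegrable _ _)
    hg.stronglyMeasurable.stronglyMeasurableAtFilter hg.continuousAt

lemma TT_cont (θ : ℝ) {g : ℝ → ℝ} (hg : Continuous g) : Continuous (TT θ g) :=
  continuous_iff_continuousAt.2 fun x => (TT_hasDeriv θ hg x).continuousAt

lemma TT_iter_cont (θ : ℝ) {g : ℝ → ℝ} (hg : Continuous g) (m : ℕ) :
    Continuous ((TT θ)^[m] g) := by
  induction m with
  | zero => simpa using hg
  | succ m ih => rw [Function.iterate_succ_apply']; exact TT_cont θ ih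

lemma TT_iter_deriv (θ : ℝ) {g : ℝ → ℝ} (hg : Continuous g) (m : ℕ) :
    deriv ((TT θ)^[m + 1] g) = (TT θ)^[m] g := by
  rw [Function.iterate_succ_apply']
  exact funext fun x => (TT_hasDeriv θ (TT_iter_cont θ hg m) x).deriv

lemma TT_iter_contDiff (θ : ℝ) {g : ℝ → ℝ} (hg : Continuous g) (m : ℕ) :
    ContDiff ℝ m ((TT θ)^[m] g) := by
  induction m with
  | zero => simpa using hg
  | succ m ih =>
    push_cast
    rw [contDiff_succ_iff_deriv]
    refine ⟨?_, by simp, ?_⟩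
    · rw [Function.iterate_succ_apply']
      exact fun x => (TT_hasDeriv θ (TT_iter_cont θ hg m) x).differentiableAt
    · rw [TT_iter_deriv θ hg]; exact ih

lemma TT_iter_iteratedDeriv (θ : ℝ) {g : ℝ → ℝ} (hg : Continuous g) (j m : ℕ) :
    iteratedDeriv j ((TT θ)^[m + j] g) = (TT θ)^[m] g := by
  induction j with
  | zero => simp
  | succ j ih =>
    rw [iteratedDeriv_succ', ← add_assoc, TT_iter_deriv θ hg, ih]

lemma kernel_eq (θ : ℝ) (m : ℕ) : ∀ (g : ℝ → ℝ), Continuous g → ∀ x : ℝ,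
    (∫ t in θ..x, (x - t) ^ m / m.factorial * g t) = (TT θ)^[m + 1] g x := by
  induction m with
  | zero => intro g hg x; simp [TT]
  | succ m ih =>
    intro g hg x
    rw [Function.iterate_succ_apply, ← ih _ (TT_cont θ hg)]
    have hu : ∀ t ∈ uIcc θ x, HasDerivAt (fun t : ℝ => (x - t) ^ (m + 1) / (m + 1).factorial)
        (-((x - t) ^ m / m.factorial)) t := by
      intro t _
      have h := (((hasDerivAt_id t).const_sub x).pow (m + 1)).div_const
        ((m + 1).factorial : ℝ)
      refine h.congr_deriv ?_
      have h1 : (m.factorial : ℝ) ≠ 0 := by positivity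
      have h2 : (m : ℝ) + 1 ≠ 0 := by positivity
      rw [Nat.factorial_succ]
      push_cast
      simp only [id, Nat.add_sub_cancel]
      field_simp
    have := intervalIntegral.integral_mul_deriv_eq_deriv_mul (a := θ) (b := x) hu
      (fun t _ => TT_hasDeriv θ hg t)
      ((by fun_prop : Continuous fun t : ℝ => -((x - t) ^ m / (m.factorial : ℝ))).intervalIntegrable _ _)
      (hg.intervalIntegrable _ _)
    rw [this]
    simp [TT]

/-- normalized monomials -/
def MM (θ : ℝ) (k : ℕ) (x : ℝ) : ℝ := (x - θ) ^ k / k.factorial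

lemma MM_contDiff (θ : ℝ) (k : ℕ) (n : WithTop ℕ∞) : ContDiff ℝ n (MM θ k) := by
  unfold MM; fun_prop

lemma MM_deriv (θ : ℝ) (k : ℕ) : deriv (MM θ (k + 1)) = MM θ k := by
  funext x
  have h := (((hasDerivAt_id x).sub_const θ).pow (k + 1)).div_const ((k + 1).factorial : ℝ)
  refine (h.congr_deriv ?_).deriv
  have h1 : (k.factorial : ℝ) ≠ 0 := by positivity
  have h2 : (k : ℝ) + 1 ≠ 0 := by positivity
  unfold MM
  rw [Nat.factorial_succ]
  push_cast
  simp only [id, Nat.add_sub_cancel]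
  field_simp

lemma MM_iter (θ : ℝ) (j m : ℕ) : iteratedDeriv j (MM θ (m + j)) = MM θ m := by
  induction j with
  | zero => simp
  | succ j ih => rw [iteratedDeriv_succ', ← add_assoc, MM_deriv, ih]

lemma MM_iter_zero (θ : ℝ) (j k : ℕ) (h : k < j) : iteratedDeriv j (MM θ k) = 0 := by
  induction k generalizing j with
  | zero =>
    obtain ⟨j, rfl⟩ : ∃ i, j = i + 1 := ⟨j - 1, by omega⟩
    have : MM θ 0 = fun _ => (1 : ℝ) := by funext x; simp [MM]
    rw [this]
    funext x
    simp [iteratedDeriv_const]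
  | succ k ih =>
    obtain ⟨j, rfl⟩ : ∃ i, j = i + 1 := ⟨j - 1, by omega⟩
    rw [iteratedDeriv_succ', MM_deriv, ih _ (by omega)]

lemma MM_iter_at (θ : ℝ) (j k : ℕ) :
    iteratedDeriv j (MM θ k) θ = if j = k then 1 else 0 := by
  rcases lt_trichotomy k j with h | h | h
  · rw [MM_iter_zero θ j k h, if_neg (by omega)]; rfl
  · subst h
    have := MM_iter θ k 0
    rw [zero_add] at this
    simp [this, MM]
  · obtain ⟨m, rfl⟩ : ∃ m, k = m + 1 + j := ⟨k - j - 1, by omega⟩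
    rw [MM_iter, if_neg (by omega)]
    simp [MM]

lemma J_cont (α β : ℝ) (n : ℕ) : Continuous (J α β n) := by
  unfold J JP; fun_prop

lemma SJ_lt (α β : ℝ) (s : ℕ) (θ : ℝ) {k : ℕ} (h : k < s) : SJ α β s θ k = MM θ k := by
  funext x; simp [SJ, MM, h]

lemma SJ_ge (α β : ℝ) (s : ℕ) (hs : 1 ≤ s) (θ : ℝ) {k : ℕ} (h : s ≤ k) :
    SJ α β s θ k = (TT θ)^[s] (J α β (k - s)) := by
  obtain ⟨s, rfl⟩ : ∃ i, s = i + 1 := ⟨s - 1, by omega⟩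
  funext x
  rw [← kernel_eq θ s _ (J_cont α β _)]
  simp [SJ, not_lt.2 h]

lemma SJ_contDiff (α β : ℝ) (s : ℕ) (hs : 1 ≤ s) (θ : ℝ) (k : ℕ) :
    ContDiff ℝ s (SJ α β s θ k) := by
  rcases lt_or_ge k s with h | h
  · rw [SJ_lt α β s θ h]; exact MM_contDiff θ k _
  · rw [SJ_ge α β s hs θ h]; exact TT_iter_contDiff θ (J_cont α β _) s

lemma SJ_iter_lt (α β : ℝ) (s : ℕ) (θ : ℝ) {k : ℕ} (h : k < s) :
    iteratedDeriv s (SJ α β s θ k) = 0 := by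
  rw [SJ_lt α β s θ h, MM_iter_zero θ s k h]

lemma SJ_iter_ge (α β : ℝ) (s : ℕ) (hs : 1 ≤ s) (θ : ℝ) {k : ℕ} (h : s ≤ k) :
    iteratedDeriv s (SJ α β s θ k) = J α β (k - s) := by
  rw [SJ_ge α β s hs θ h]
  simpa using TT_iter_iteratedDeriv θ (J_cont α β (k - s)) s 0

lemma SJ_iter_ge_at (α β : ℝ) (s : ℕ) (hs : 1 ≤ s) (θ : ℝ) {k j : ℕ} (h : s ≤ k) (hj : j < s) :
    iteratedDeriv j (SJ α β s θ k) θ = 0 := by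
  rw [SJ_ge α β s hs θ h]
  obtain ⟨m, rfl⟩ : ∃ m, s = m + 1 + j := ⟨s - j - 1, by omega⟩
  rw [TT_iter_iteratedDeriv θ (J_cont α β _), Function.iterate_succ_apply']
  simp [TT]

lemma coeffS_lt (α β : ℝ) (s : ℕ) (θ : ℝ) (lam : ℕ → ℝ)
    (hlam : ∀ k, k < s → 0 < lam k) (f : ℝ → ℝ) {k : ℕ} (h : k < s) :
    coeffS α β s θ lam k f = iteratedDeriv k f θ := by
  have key : ∀ g : ℝ → ℝ, ipS α β s θ lam g (SJ α β s θ k) = lam k * iteratedDeriv k g θ := by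
    intro g
    unfold ipS
    rw [SJ_iter_lt α β s θ h, SJ_lt α β s θ h]
    simp [ip, MM_iter_at, h]
  have h0 := (hlam k h).ne'
  unfold coeffS
  rw [key, key, SJ_lt α β s θ h, MM_iter_at]
  simp
  field_simp

lemma coeffS_ge (α β : ℝ) (s : ℕ) (hs : 1 ≤ s) (θ : ℝ) (lam : ℕ → ℝ) (f : ℝ → ℝ)
    {k : ℕ} (h : s ≤ k) :
    coeffS α β s θ lam k f = coeff α β (k - s) (iteratedDeriv s f) := by
  have key : ∀ g : ℝ → ℝ, ipS α β s θ lam g (SJ α β s θ k) =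
      ip α β (iteratedDeriv s g) (J α β (k - s)) := by
    intro g
    unfold ipS
    rw [SJ_iter_ge α β s hs θ h, Finset.sum_eq_zero, add_zero]
    intro j hj
    rw [SJ_iter_ge_at α β s hs θ h (Finset.mem_range.1 hj), mul_zero]
  unfold coeffS coeff hJ
  rw [key, key, SJ_iter_ge α β s hs θ h]

theorem statement13 (α β : ℝ) (hα : -1 < α) (hβ : -1 < β) (s : ℕ) (hs : 1 ≤ s)
    (θ : ℝ) (hθ : θ ∈ Icc (-1 : ℝ) 1) (lam : ℕ → ℝ) (hlam : ∀ k, k < s → 0 < lam k)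
    (p : ℝ≥0∞) (hp : 1 ≤ p) (f : ℝ → ℝ) (hf : MemW α β p s f) :
    (∀ n : ℕ, ∀ x : ℝ, SS α β s θ lam n f x =
      (∑ k ∈ Finset.range (min (n + 1) s), iteratedDeriv k f θ * (x - θ) ^ k / k.factorial)
        + (if n < s then 0 else
            ∫ t in θ..x, (x - t) ^ (s - 1) / (s - 1).factorial *
              S α β (n - s) (iteratedDeriv s f) t)) ∧
    (∀ n : ℕ, s ≤ n →
      iteratedDeriv s (SS α β s θ lam n f) = S α β (n - s) (iteratedDeriv s f)) := by
  constructor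
  · intro n x
    by_cases hn : n < s
    · rw [if_pos hn, add_zero, min_eq_left (by omega)]
      unfold SS
      refine Finset.sum_congr rfl fun k hk => ?_
      have hk' : k < s := by have := Finset.mem_range.1 hk; omega
      rw [coeffS_lt α β s θ lam hlam f hk', SJ_lt α β s θ hk', MM, mul_div_assoc]
    · obtain ⟨m, rfl⟩ : ∃ m, n = s + m := ⟨n - s, by omega⟩
      rw [if_neg hn, min_eq_right (by omega)]
      unfold SS
      rw [add_assoc, Finset.sum_range_add]
      congr 1
      · refine Finset.sum_congr rfl fun k hk => ?_
        have hk' : k < s := Finset.mem_range.1 hk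
        rw [coeffS_lt α β s θ lam hlam f hk', SJ_lt α β s θ hk', MM, mul_div_assoc]
      · unfold S
        simp only [Nat.add_sub_cancel_left, Finset.mul_sum]
        rw [intervalIntegral.integral_finsetSum]
        · refine Finset.sum_congr rfl fun k hk => ?_
          rw [coeffS_ge α β s hs θ lam f (Nat.le_add_right s k), SJ,
            if_neg (by omega), Nat.add_sub_cancel_left, ← intervalIntegral.integral_const_mul]
          congr 1
          funext t
          ring
        · intro k _
          have := J_cont α β k
          exact Continuous.intervalIntegrable (by fun_prop) _ _
  · intro n hn
    obtain ⟨m, rfl⟩ : ∃ m, n = s + m := ⟨n - s, by omega⟩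
    funext x
    have e : SS α β s θ lam (s + m) f =
        fun y => ∑ k ∈ Finset.range (s + m + 1), coeffS α β s θ lam k f * SJ α β s θ k y := rfl
    rw [e, iteratedDeriv_fun_sum
      (fun k _ => (contDiff_const.mul (SJ_contDiff α β s hs θ k)).contDiffAt),
      add_assoc, Finset.sum_range_add, Finset.sum_eq_zero, zero_add, Nat.add_sub_cancel_left]
    · unfold S
      refine Finset.sum_congr rfl fun k hk => ?_
      rw [iteratedDeriv_const_mul_field, SJ_iter_ge α β s hs θ (Nat.le_add_right s k),
        coeffS_ge α β s hs θ lam f (Nat.le_add_right s k), Nat.add_sub_cancel_left]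
    · intro k hk
      rw [iteratedDeriv_const_mul_field, SJ_iter_lt α β s θ (Finset.mem_range.1 hk)]
      simp

end JacobiApprox
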